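/- Let x : ℝ → ℝ² be a C^∞ curve parametrized by affine arc length with affine curvature k, and fix s₀ ∈ ℝ. Then there exist δ > 0 and a C^∞ function τ : (s₀ − δ, s₀ + δ) → ℝ with τ(s₀) = s₀ and τ'(s₀) = −1 such that ω(x(s) − x(τ(s)), x'(s₀)) = 0 for all |s − s₀| < δ (i.e. the chord from x(τ(s)) to x(s) is parallel to the tangent direction x'(s₀)), and moreover τ(s) = 2s₀ − s + (1/30)·k'(s₀)·(s − s₀)⁴ + o((s − s₀)⁵) as s → s₀. -/

import Mathlib

open Filter
open scoped Topology

/-- The standard area form on the plane: `ω(u,v) = u₁v₂ − u₂v₁`. -/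
noncomputable def om (u v : ℝ × ℝ) : ℝ := u.1 * v.2 - u.2 * v.1

/-!
Let `F s = ω(x'(s₀), x(s))`: the chord from `x(τ(s))` to `x(s)` is parallel to `x'(s₀)` iff
`F (τ s) = F s`. Differentiating `ω(x', x'') = 1` gives `F' = 0`, `F'' = 1`, `F''' = 0` and
`F⁽⁵⁾ = -2k'` at `s₀`. Hence `F` has a Morse coordinate `h` there, `F = F(s₀) + h² / 2`, and
`τ = h⁻¹ ∘ (-h)`. For the expansion, put `q(s) = 2s₀ - s - b(s - s₀)⁴`: the choice
`b = F⁽⁵⁾ / (60F'')` makes `F ∘ q - F = o((s - s₀)⁶)`, and since `F'` has a simple zero at `s₀`,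
`F ∘ τ - F ∘ q = o((s - s₀)⁶)` forces `τ - q = o((s - s₀)⁵)`.
-/

open Asymptotics Set

universe u v

theorem contDiff_fderiv_fst {H G E : Type*} [NormedAddCommGroup H] [NormedSpace ℝ H]
    [NormedAddCommGroup G] [NormedSpace ℝ G] [NormedAddCommGroup E] [NormedSpace ℝ E]
    {f : H → G → E} {n : WithTop ℕ∞} (hf : ContDiff ℝ (n + 1) (Function.uncurry f)) :
    ContDiff ℝ n fun p : H × G ↦ fderiv ℝ (f · p.2) p.1 :=
  ContDiff.fderiv_succ (f := fun (p : H × G) x ↦ f x p.2)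
    (hf.comp (contDiff_snd.prodMk (contDiff_snd.comp contDiff_fst))) contDiff_fst

theorem hasFDerivAt_intervalIntegral_of_contDiff {H E : Type*} [NormedAddCommGroup H]
    [NormedSpace ℝ H] [NormedAddCommGroup E] [NormedSpace ℝ E] {f : H → ℝ → E}
    (hf : ContDiff ℝ 1 (Function.uncurry f)) (a b : ℝ) (x₀ : H) :
    HasFDerivAt (fun x ↦ ∫ t in a..b, f x t) (∫ t in a..b, fderiv ℝ (f · t) x₀) x₀ := by
  have hcont := hf.continuous
  have hcont' : Continuous fun p : H × ℝ ↦ fderiv ℝ (f · p.2) p.1 :=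
    (contDiff_fderiv_fst (n := 0) (by simpa using hf)).continuous
  have hcont₀ : Continuous fun t ↦ fderiv ℝ (f · t) x₀ :=
    hcont'.comp (Continuous.prodMk_right x₀)
  obtain ⟨C, hC⟩ := (isCompact_uIcc (a := a) (b := b)).exists_bound_of_continuousOn
    hcont₀.continuousOn
  have hbound : ∀ᶠ x in 𝓝 x₀, ∀ t ∈ uIcc a b, ‖fderiv ℝ (f · t) x‖ ≤ C + 1 :=
    isCompact_uIcc.eventually_forall_of_forall_eventually fun t ht ↦
      hcont'.norm.continuousAt.eventually_le_const ((hC t ht).trans_lt (lt_add_one C))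
  refine intervalIntegral.hasFDerivAt_integral_of_dominated_of_fderiv_le
    (F' := fun x t ↦ fderiv ℝ (f · t) x) (bound := fun _ ↦ C + 1) hbound ?_ ?_
    hcont₀.aestronglyMeasurable ?_ (by simp) ?_
  · exact .of_forall fun x ↦ (hcont.comp (Continuous.prodMk_right x)).aestronglyMeasurable
  · exact (hcont.comp (Continuous.prodMk_right x₀)).intervalIntegrable _ _
  · exact .of_forall fun t ht x hx ↦ hx t (uIoc_subset_uIcc ht)
  · exact .of_forall fun t _ x _ ↦ ((hf.comp
      (contDiff_id.prodMk contDiff_const)).differentiable one_ne_zero x).hasFDerivAt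

theorem contDiff_intervalIntegral {H : Type u} {E : Type (max u v)} [NormedAddCommGroup H]
    [NormedSpace ℝ H] [NormedAddCommGroup E] [NormedSpace ℝ E] {f : H → ℝ → E} {n : ℕ∞}
    (hf : ContDiff ℝ n (Function.uncurry f)) (a b : ℝ) :
    ContDiff ℝ n fun x ↦ ∫ t in a..b, f x t := by
  refine contDiff_iff_forall_nat_le.2 fun m hm ↦ ?_
  replace hf : ContDiff ℝ m (Function.uncurry f) := hf.of_le (mod_cast hm)
  clear hm
  induction m generalizing E with
  | zero =>
    exact contDiff_zero.2 <|
      intervalIntegral.continuous_parametric_intervalIntegral_of_continuous' hf.continuous a b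
  | succ m ih =>
    push_cast at hf ⊢
    refine contDiff_succ_iff_hasFDerivAt.2
      ⟨fun x ↦ ∫ t in a..b, fderiv ℝ (f · t) x, ih (contDiff_fderiv_fst hf), fun x ↦ ?_⟩
    exact hasFDerivAt_intervalIntegral_of_contDiff (hf.of_le (by simp)) a b x

section Taylor

variable {E : Type v} [NormedAddCommGroup E] [NormedSpace ℝ E] {f : ℝ → E} {m : ℕ}

theorem taylorWithinEval_eq_of_uniqueDiffOn (hf : ContDiff ℝ m f) {s : Set ℝ}
    (hs : UniqueDiffOn ℝ s) {a : ℝ} (ha : a ∈ s) (x : ℝ) :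
    taylorWithinEval f m s a x = taylorWithinEval f m univ a x := by
  simp only [taylor_within_apply]
  refine Finset.sum_congr rfl fun i hi ↦ ?_
  have hi' : ContDiffAt ℝ i f a :=
    (hf.of_le (mod_cast Finset.mem_range_succ_iff.1 hi)).contDiffAt
  rw [iteratedDerivWithin_eq_iteratedDeriv hs hi' ha, iteratedDerivWithin_univ]

theorem contDiff_iteratedDeriv {n : WithTop ℕ∞} (hf : ContDiff ℝ (n + m) f) :
    ContDiff ℝ n (iteratedDeriv m f) := by
  rw [iteratedDeriv_eq_equiv_comp]
  exact (LinearIsometryEquiv.contDiff _).comp (hf.iteratedFDeriv_right le_rfl)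

theorem taylor_integral_remainder_unitInterval [CompleteSpace E] (hf : ContDiff ℝ (m + 1 : ℕ) f)
    (a x : ℝ) :
    f x = taylorWithinEval f m univ a x + (x - a) ^ (m + 1) •
      ∫ u in (0 : ℝ)..1, ((1 - u) ^ m / m.factorial) •
        iteratedDeriv (m + 1) f (a + (x - a) * u) := by
  rcases eq_or_ne a x with rfl | hax
  · simp
  have hu : UniqueDiffOn ℝ (uIcc a x) := uniqueDiffOn_uIcc hax
  have hint (t : ℝ) (ht : t ∈ uIcc a x) :
      iteratedDerivWithin (m + 1) f (uIcc a x) t = iteratedDeriv (m + 1) f t :=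
    iteratedDerivWithin_eq_iteratedDeriv hu hf.contDiffAt ht
  rw [← taylorWithinEval_eq_of_uniqueDiffOn (hf.of_le (by simp)) hu left_mem_uIcc,
    ← sub_eq_iff_eq_add', taylor_integral_remainder hf.contDiffOn]
  calc _ = ∫ t in a..x, ((x - t) ^ m / m.factorial) • iteratedDeriv (m + 1) f t :=
        intervalIntegral.integral_congr fun t ht ↦ by simp only [hint t ht]
    _ = (x - a) • ∫ u in (0 : ℝ)..1, ((x - (a + (x - a) * u)) ^ m / m.factorial) •
        iteratedDeriv (m + 1) f (a + (x - a) * u) := by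
      rw [intervalIntegral.smul_integral_comp_add_mul
        (fun t ↦ ((x - t) ^ m / m.factorial) • iteratedDeriv (m + 1) f t)]
      simp
    _ = _ := by
      simp only [show ∀ u, x - (a + (x - a) * u) = (x - a) * (1 - u) by intro u; ring,
        mul_pow, mul_div_assoc, mul_smul, intervalIntegral.integral_smul, pow_succ']

theorem exists_contDiff_taylor_remainder [CompleteSpace E] {n : ℕ∞}
    (hf : ContDiff ℝ (n + (m + 1 : ℕ)) f) (a : ℝ) :
    ∃ g : ℝ → E, ContDiff ℝ n g ∧ g a = ((m + 1).factorial : ℝ)⁻¹ • iteratedDeriv (m + 1) f a ∧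
      ∀ x, f x = taylorWithinEval f m univ a x + (x - a) ^ (m + 1) • g x := by
  refine ⟨_, ?_, ?_, taylor_integral_remainder_unitInterval (hf.of_le le_add_self) a⟩
  · have hsmooth : ContDiff ℝ n (iteratedDeriv (m + 1) f) := contDiff_iteratedDeriv hf
    refine contDiff_intervalIntegral.{0, v} (f := fun x u ↦ ((1 - u) ^ m / m.factorial) •
      iteratedDeriv (m + 1) f (a + (x - a) * u)) ?_ 0 1
    simp only [Function.uncurry_def]
    fun_prop
  · have hweight : ∫ u in (0 : ℝ)..1, (1 - u) ^ m = ((m : ℝ) + 1)⁻¹ := by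
      rw [intervalIntegral.integral_comp_sub_left (fun u ↦ u ^ m), integral_pow]
      simp
    simp only [sub_self, zero_mul, add_zero]
    rw [intervalIntegral.integral_smul_const, intervalIntegral.integral_div, hweight,
      Nat.factorial_succ, Nat.cast_mul, Nat.cast_succ, mul_inv, div_eq_mul_inv]

theorem isLittleO_comp_sub_taylorWithinEval (hf : ContDiff ℝ m f) {q : ℝ → ℝ} {a l : ℝ}
    (hq : HasDerivAt q l a) (hqa : q a = a) :
    (fun s ↦ f (q s) - taylorWithinEval f m univ a (q s)) =o[𝓝 a] fun s ↦ (s - a) ^ m := by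
  have hlim : Tendsto q (𝓝 a) (𝓝 a) := by simpa only [ContinuousAt, hqa] using hq.continuousAt
  have hqO : (fun s ↦ q s - a) =O[𝓝 a] fun s ↦ s - a := by
    simpa only [hqa] using hq.differentiableAt.isBigO_sub
  exact ((taylor_isLittleO_univ hf).comp_tendsto hlim).trans_isBigO (hqO.pow m)

end Taylor

theorem exists_morse_coordinate {F : ℝ → ℝ} {a : ℝ} {n : ℕ∞} (hF : ContDiff ℝ (n + 2) F)
    (hF₁ : deriv F a = 0) (hF₂ : iteratedDeriv 2 F a ≠ 0) :
    ∃ h : ℝ → ℝ, (∀ᶠ s in 𝓝 a, ContDiffAt ℝ n h s) ∧ h a = 0 ∧ HasDerivAt h 1 a ∧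
      ∀ᶠ s in 𝓝 a, F s = F a + iteratedDeriv 2 F a / 2 * h s ^ 2 := by
  obtain ⟨g, hg, hga, hFg⟩ := exists_contDiff_taylor_remainder (m := 1) hF a
  set c := iteratedDeriv 2 F a
  let q s := 2 * g s / c
  have hq : ContDiff ℝ n q := by fun_prop
  have hqa : q a = 1 := by
    simp only [q, hga]
    norm_num
    field_simp
  have hqpos : ∀ᶠ s in 𝓝 a, 0 < q s :=
    hq.continuous.continuousAt.eventually_const_lt (by simp [hqa])
  refine ⟨fun s ↦ (s - a) * √(q s), hqpos.mono fun s hs ↦ ?_, by simp, ?_, hqpos.mono fun s hs ↦ ?_⟩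
  · exact (contDiff_id.sub contDiff_const).contDiffAt.mul (hq.contDiffAt.sqrt hs.ne')
  · have hslope : Tendsto (fun s ↦ √(q s)) (𝓝[≠] a) (𝓝 1) := by
      have : ContinuousAt (fun s ↦ √(q s)) a := hq.continuous.sqrt.continuousAt
      simpa [ContinuousAt, hqa] using this.continuousWithinAt (s := {a}ᶜ).tendsto
    refine hasDerivAt_iff_tendsto_slope.2 (hslope.congr' ?_)
    filter_upwards [self_mem_nhdsWithin] with s hs
    simp [slope_def_field, sub_ne_zero.2 hs]
  · have hT : taylorWithinEval F 1 univ a s = F a := by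
      simp [taylorWithinEval_succ, iteratedDerivWithin_univ, hF₁]
    rw [hFg s, hT, mul_pow, Real.sq_sqrt hs.le, smul_eq_mul]
    simp only [q]
    field_simp

theorem exists_reflection_of_hasDerivAt {𝕂 : Type*} [RCLike 𝕂] {h : 𝕂 → 𝕂} {h' a : 𝕂}
    {n : WithTop ℕ∞} (hn : n ≠ 0) (hsmooth : ∀ᶠ s in 𝓝 a, ContDiffAt 𝕂 n h s) (ha : h a = 0)
    (hderiv : HasDerivAt h h' a) (hh' : h' ≠ 0) :
    ∃ τ : 𝕂 → 𝕂, (∀ᶠ s in 𝓝 a, ContDiffAt 𝕂 n τ s) ∧ τ a = a ∧ HasDerivAt τ (-1) a ∧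
      ∀ᶠ s in 𝓝 a, h (τ s) = -h s := by
  have hstrict : HasStrictDerivAt h h' a := hsmooth.self_of_nhds.hasStrictDerivAt' hderiv hn
  have hequiv := hstrict.hasStrictFDerivAt_equiv hh'
  let e := hequiv.toOpenPartialHomeomorph h
  have htarget : -h a ∈ e.target := by
    simpa only [ha, neg_zero] using hequiv.image_mem_toOpenPartialHomeomorph_target
  have hτa : e.symm (-h a) = a := by
    have := e.left_inv hequiv.mem_toOpenPartialHomeomorph_source
    rwa [show e a = h a from rfl, ha, ← neg_zero, ← ha] at this
  have hτderiv : HasDerivAt (fun s ↦ e.symm (-h s)) (-1) a := by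
    have hinv : HasDerivAt e.symm h'⁻¹ (-h a) := by
      have := (hstrict.to_localInverse hh').hasDerivAt
      rwa [ha, ← neg_zero, ← ha] at this
    exact (hinv.comp a hderiv.neg).congr_deriv (by field_simp)
  have hτtendsto : Tendsto (fun s ↦ e.symm (-h s)) (𝓝 a) (𝓝 a) := by
    simpa only [ContinuousAt, hτa] using hτderiv.continuousAt
  have hmem : ∀ᶠ s in 𝓝 a, -h s ∈ e.target :=
    hderiv.continuousAt.neg.eventually_mem (e.open_target.mem_nhds htarget)
  have hderiv_ne : ∀ᶠ s in 𝓝 a, deriv h s ≠ 0 := by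
    have hcont : ContinuousAt (deriv h) a :=
      (hsmooth.self_of_nhds.continuousAt_fderiv hn).clm_apply continuousAt_const
    exact hcont.eventually_ne (by rwa [hderiv.deriv])
  refine ⟨fun s ↦ e.symm (-h s), ?_, hτa, hτderiv, hmem.mono fun s ↦ e.right_inv⟩
  filter_upwards [hsmooth, hτtendsto.eventually hsmooth, hτtendsto.eventually hderiv_ne, hmem]
    with s hs hτs hne hst
  exact (e.contDiffAt_symm_deriv hne hst (hτs.differentiableAt hn).hasDerivAt hτs).comp s hs.neg

/-- A local reflection of `ℝ` at `a`, tangent to `s ↦ 2 * a - s`, which preserves `F`. -/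
structure IsReflectionAt (F τ : ℝ → ℝ) (a : ℝ) : Prop where
  apply_self : τ a = a
  hasDerivAt : HasDerivAt τ (-1) a
  comp_eventuallyEq : F ∘ τ =ᶠ[𝓝 a] F

theorem exists_isReflectionAt {F : ℝ → ℝ} {a : ℝ} {n : ℕ∞} (hn : n ≠ 0) (hF : ContDiff ℝ (n + 2) F)
    (hF₁ : deriv F a = 0) (hF₂ : iteratedDeriv 2 F a ≠ 0) :
    ∃ τ : ℝ → ℝ, (∀ᶠ s in 𝓝 a, ContDiffAt ℝ n τ s) ∧ IsReflectionAt F τ a := by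
  obtain ⟨h, hsmooth, ha, hderiv, hFh⟩ := exists_morse_coordinate hF hF₁ hF₂
  obtain ⟨τ, hτ, hτa, hτderiv, hhτ⟩ :=
    exists_reflection_of_hasDerivAt (mod_cast hn) hsmooth ha hderiv one_ne_zero
  have hτtendsto : Tendsto τ (𝓝 a) (𝓝 a) := by
    simpa only [ContinuousAt, hτa] using hτderiv.continuousAt
  refine ⟨τ, hτ, hτa, hτderiv, ?_⟩
  filter_upwards [hFh, hτtendsto.eventually hFh, hhτ] with s hs hτs hhs
  rw [Function.comp_apply, hτs, hs, hhs, neg_sq]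

theorem exists_deriv_mul_eq_sub {F : ℝ → ℝ} (hF : Differentiable ℝ F) (x y : ℝ) :
    ∃ ξ ∈ uIcc x y, F y - F x = deriv F ξ * (y - x) := by
  simpa [segment_eq_uIcc, mul_comm] using
    domain_mvt (fun z _ ↦ (hF z).hasFDerivAt.hasFDerivWithinAt) convex_univ
      (mem_univ x) (mem_univ y)

theorem hasDerivAt_of_mem_uIcc {u v w : ℝ → ℝ} {a l : ℝ} (hu : HasDerivAt u l a)
    (hv : HasDerivAt v l a) (huv : u a = v a) (hw : ∀ s, w s ∈ uIcc (u s) (v s)) :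
    HasDerivAt w l a := by
  have hwa : w a = v a := by simpa [huv] using hw a
  rw [hasDerivAt_iff_isLittleO] at *
  refine IsBigO.trans_isLittleO (.of_bound' <| .of_forall fun s ↦ ?_)
    (hu.norm_left.add hv.norm_left)
  simp only [hwa, huv, Real.norm_eq_abs, smul_eq_mul]
  grind [mem_uIcc]

theorem isLittleO_sub_of_comp {F u v : ℝ → ℝ} {a c l : ℝ} {n : ℕ} (hF : Differentiable ℝ F)
    (hF₁ : deriv F a = 0) (hF₂ : HasDerivAt (deriv F) c a) (hc : c ≠ 0) (hl : l ≠ 0)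
    (hu : HasDerivAt u l a) (hv : HasDerivAt v l a) (hua : u a = a) (hva : v a = a)
    (huv : (fun s ↦ F (u s) - F (v s)) =o[𝓝 a] fun s ↦ (s - a) ^ (n + 1)) :
    (fun s ↦ u s - v s) =o[𝓝 a] fun s ↦ (s - a) ^ n := by
  choose ξ hξ hmvt using fun s ↦ exists_deriv_mul_eq_sub hF (v s) (u s)
  have hξa : ξ a = a := by simpa [hua, hva] using hξ a
  have hcomp : HasDerivAt (deriv F ∘ ξ) (c * l) a :=
    HasDerivAt.comp a (by rwa [hξa]) (hasDerivAt_of_mem_uIcc hv hu (hva.trans hua.symm) hξ)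
  have hslope : (fun s ↦ s - a) =O[𝓝 a] fun s ↦ deriv F (ξ s) := by
    have := (hcomp.isTheta_sub (mul_ne_zero hc hl)).isBigO_symm.comp_tendsto
      (tendsto_id.prodMk (tendsto_pure.2 <| .of_forall fun _ ↦ rfl) :
        Tendsto (fun s ↦ (s, a)) (𝓝 a) (𝓝 a ×ˢ pure a))
    simpa [Function.comp_def, hξa, hF₁] using this
  have hprod : (fun s ↦ (s - a) * (u s - v s)) =o[𝓝 a] fun s ↦ (s - a) * (s - a) ^ n := by
    simp only [← pow_succ']
    exact (hslope.mul (isBigO_refl _ _)).trans_isLittleO (by simpa only [hmvt] using huv)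
  refine .of_bound fun ε hε ↦ (hprod.bound hε).mono fun s hs ↦ ?_
  rcases eq_or_ne s a with rfl | hsa
  · simp only [hua, hva, sub_self, norm_zero]
    positivity
  · simpa [norm_mul, mul_left_comm ε, sub_ne_zero.2 hsa] using hs

/-- The map `s ↦ 2 * a - s` corrected by a quartic term, the model for the jet of a reflection
that preserves a function with vanishing third derivative at `a`. -/
def quarticReflection (a b s : ℝ) : ℝ :=
  2 * a - s - b * (s - a) ^ 4

theorem quarticReflection_self (a b : ℝ) : quarticReflection a b a = a := by
  simp only [quarticReflection]
  ring

theorem hasDerivAt_quarticReflection_self (a b : ℝ) :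
    HasDerivAt (quarticReflection a b) (-1) a := by
  have hquartic := (((hasDerivAt_id a).sub_const a).pow 4).const_mul b
  exact (((hasDerivAt_id a).const_sub (2 * a)).sub hquartic).congr_deriv (by simp)

theorem isLittleO_sextic_comp_sub {p₂ p₅ b : ℝ} (hb : p₂ * b = p₅) (p₄ p₆ : ℝ) :
    let P := fun t : ℝ ↦ p₂ * t ^ 2 + p₄ * t ^ 4 + p₅ * t ^ 5 + p₆ * t ^ 6
    (fun t ↦ P (-t - b * t ^ 4) - P t) =o[𝓝 0] fun t ↦ t ^ 6 := by
  intro P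
  let y t := b * t ^ 3
  let Q t := b * (p₂ * b * t + p₄ * (4 + 6 * y t + 4 * y t ^ 2 + y t ^ 3)
    - p₅ * t * (5 + 10 * y t + 10 * y t ^ 2 + 5 * y t ^ 3 + y t ^ 4)
    + p₆ * t ^ 2 * (6 + 15 * y t + 20 * y t ^ 2 + 15 * y t ^ 3 + 6 * y t ^ 4 + y t ^ 5))
  -- Below order `7` only the term `2 * (p₂ * b - p₅) * t ^ 5` occurs, and it vanishes by `hb`.
  have hfactor (t : ℝ) : P (-t - b * t ^ 4) - P t = t * Q t * t ^ 6 := by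
    simp only [P, Q, y, ← hb]
    ring
  have hlim : Tendsto (fun t ↦ t * Q t) (𝓝 0) (𝓝 0) := by
    have : Continuous fun t ↦ t * Q t := by fun_prop
    simpa using this.tendsto 0
  simpa [hfactor] using (isLittleO_one_iff ℝ).2 hlim |>.mul_isBigO (isBigO_refl (· ^ 6) (𝓝 0))

theorem isLittleO_comp_quarticReflection_sub {F : ℝ → ℝ} {a b : ℝ} (hF : ContDiff ℝ 6 F)
    (hF₁ : deriv F a = 0) (hF₃ : iteratedDeriv 3 F a = 0)
    (hb : 60 * iteratedDeriv 2 F a * b = iteratedDeriv 5 F a) :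
    (fun s ↦ F (quarticReflection a b s) - F s) =o[𝓝 a] fun s ↦ (s - a) ^ 6 := by
  let T := taylorWithinEval F 6 univ a
  have hT (s : ℝ) : T s = F a + (iteratedDeriv 2 F a / 2 * (s - a) ^ 2 +
      iteratedDeriv 4 F a / 24 * (s - a) ^ 4 + iteratedDeriv 5 F a / 120 * (s - a) ^ 5 +
      iteratedDeriv 6 F a / 720 * (s - a) ^ 6) := by
    simp only [T, taylor_within_apply, Finset.sum_range_succ, Finset.sum_range_zero,
      iteratedDerivWithin_univ, iteratedDeriv_zero, iteratedDeriv_one, hF₁, hF₃, smul_eq_mul,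
      Nat.factorial]
    norm_num
    ring
  have hFT : (fun s ↦ F s - T s) =o[𝓝 a] fun s ↦ (s - a) ^ 6 :=
    taylor_isLittleO_univ (n := 6) hF
  have hFTq : (fun s ↦ F (quarticReflection a b s) - T (quarticReflection a b s)) =o[𝓝 a]
      fun s ↦ (s - a) ^ 6 :=
    isLittleO_comp_sub_taylorWithinEval (m := 6) hF (hasDerivAt_quarticReflection_self a b)
      (quarticReflection_self a b)
  have hTT : (fun s ↦ T (quarticReflection a b s) - T s) =o[𝓝 a] fun s ↦ (s - a) ^ 6 := by
    have hcancel : iteratedDeriv 2 F a / 2 * b = iteratedDeriv 5 F a / 120 := by linarith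
    have hsub : Tendsto (· - a) (𝓝 a) (𝓝 0) := by
      simpa using (continuous_sub_right a).tendsto a
    refine ((isLittleO_sextic_comp_sub hcancel (iteratedDeriv 4 F a / 24)
      (iteratedDeriv 6 F a / 720)).comp_tendsto hsub).congr_left fun s ↦ ?_
    simp only [Function.comp_apply, hT, quarticReflection]
    ring
  exact (hFTq.add hTT |>.sub hFT).congr_left fun s ↦ by ring

theorem IsReflectionAt.isLittleO_sub_quarticReflection {F τ : ℝ → ℝ} {a b : ℝ}
    (hτ : IsReflectionAt F τ a) (hF : ContDiff ℝ 6 F) (hF₁ : deriv F a = 0)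
    (hF₂ : iteratedDeriv 2 F a ≠ 0) (hF₃ : iteratedDeriv 3 F a = 0)
    (hb : 60 * iteratedDeriv 2 F a * b = iteratedDeriv 5 F a) :
    (fun s ↦ τ s - quarticReflection a b s) =o[𝓝 a] fun s ↦ (s - a) ^ 5 := by
  have hF'' : HasDerivAt (deriv F) (iteratedDeriv 2 F a) a := by
    rw [iteratedDeriv_succ, iteratedDeriv_one]
    exact (hF.of_le (by norm_num)).differentiable_deriv_two.differentiableAt.hasDerivAt
  have hq := isLittleO_comp_quarticReflection_sub hF hF₁ hF₃ hb
  refine isLittleO_sub_of_comp (hF.differentiable (by norm_num)) hF₁ hF'' hF₂ (by norm_num)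
    hτ.hasDerivAt (hasDerivAt_quarticReflection_self a b) hτ.apply_self
    (quarticReflection_self a b) (hq.neg_left.congr' ?_ .rfl)
  filter_upwards [hτ.comp_eventuallyEq] with s hs
  rw [neg_sub, ← hs, Function.comp_apply]

theorem om_self (u : ℝ × ℝ) : om u u = 0 := by
  simp only [om]
  ring

theorem om_zero_left (u : ℝ × ℝ) : om 0 u = 0 := by
  simp [om]

theorem hasDerivAt_om {u v : ℝ → ℝ × ℝ} {u' v' : ℝ × ℝ} {s : ℝ} (hu : HasDerivAt u u' s)
    (hv : HasDerivAt v v' s) :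
    HasDerivAt (fun s ↦ om (u s) (v s)) (om u' (v s) + om (u s) v') s := by
  have hu₁ := hu.hasFDerivAt.fst.hasDerivAt
  have hu₂ := hu.hasFDerivAt.snd.hasDerivAt
  have hv₁ := hv.hasFDerivAt.fst.hasDerivAt
  have hv₂ := hv.hasFDerivAt.snd.hasDerivAt
  refine ((hu₁.mul hv₂).sub (hu₂.mul hv₁)).congr_deriv ?_
  simp only [om, ContinuousLinearMap.comp_apply, ContinuousLinearMap.toSpanSingleton_apply,
    one_smul, ContinuousLinearMap.coe_fst', ContinuousLinearMap.coe_snd']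
  ring

/-- Parametrization by affine arc length, `ω(x', x'') = 1`. -/
def IsAffineArcLength (x : ℝ → ℝ × ℝ) : Prop :=
  ∀ s, om (deriv x s) (iteratedDeriv 2 x s) = 1

/-- The affine curvature `ω(x'', x''')`; this is the geometric notion only for curves
parametrized by affine arc length. -/
noncomputable def affineCurvature (x : ℝ → ℝ × ℝ) (s : ℝ) : ℝ :=
  om (iteratedDeriv 2 x s) (iteratedDeriv 3 x s)

/-- The height `ω(x'(s₀), x(s))` of the point `x(s)` in the direction transverse to the tangent
at `x(s₀)`: a chord is parallel to that tangent iff its endpoints have the same height. -/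
noncomputable def tangentHeight (x : ℝ → ℝ × ℝ) (s₀ s : ℝ) : ℝ :=
  om (deriv x s₀) (x s)

section AffineGeometry

variable {x : ℝ → ℝ × ℝ}

theorem om_sub_deriv_eq_zero_iff {s₀ s t : ℝ} :
    om (x s - x t) (deriv x s₀) = 0 ↔ tangentHeight x s₀ t = tangentHeight x s₀ s := by
  simp only [om, tangentHeight, Prod.fst_sub, Prod.snd_sub]
  constructor <;> intro h <;> linarith

theorem contDiff_tangentHeight {n : WithTop ℕ∞} (hx : ContDiff ℝ n x) (s₀ : ℝ) :
    ContDiff ℝ n (tangentHeight x s₀) := by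
  unfold tangentHeight om
  fun_prop

theorem iteratedDeriv_tangentHeight {n : ℕ} (hx : ContDiff ℝ n x) (s₀ s : ℝ) :
    iteratedDeriv n (tangentHeight x s₀) s = om (deriv x s₀) (iteratedDeriv n x s) := by
  induction n generalizing s with
  | zero => rfl
  | succ n ih =>
    have hderiv := (hx.differentiable_iteratedDeriv n (mod_cast n.lt_succ_self) s).hasDerivAt
    rw [iteratedDeriv_succ, funext (ih (hx.of_le (by simp))), iteratedDeriv_succ,
      (hasDerivAt_om (hasDerivAt_const s (deriv x s₀)) hderiv).deriv, om_zero_left, zero_add]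

theorem deriv_tangentHeight_self (hx : ContDiff ℝ 1 x) (s₀ : ℝ) :
    deriv (tangentHeight x s₀) s₀ = 0 := by
  rw [← iteratedDeriv_one, iteratedDeriv_tangentHeight hx, iteratedDeriv_one, om_self]

theorem hasDerivAt_om_iteratedDeriv {n : WithTop ℕ∞} (hx : ContDiff ℝ n x) {i j : ℕ}
    (hi : i < n) (hj : j < n) (s : ℝ) :
    HasDerivAt (fun s ↦ om (iteratedDeriv i x s) (iteratedDeriv j x s))
      (om (iteratedDeriv (i + 1) x s) (iteratedDeriv j x s) +
        om (iteratedDeriv i x s) (iteratedDeriv (j + 1) x s)) s := by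
  rw [iteratedDeriv_succ, iteratedDeriv_succ]
  exact hasDerivAt_om (hx.differentiable_iteratedDeriv i hi s).hasDerivAt
    (hx.differentiable_iteratedDeriv j hj s).hasDerivAt

theorem deriv_affineCurvature (hx : ContDiff ℝ 4 x) (s : ℝ) :
    deriv (affineCurvature x) s = om (iteratedDeriv 2 x s) (iteratedDeriv 4 x s) := by
  have h := (hasDerivAt_om_iteratedDeriv hx (i := 2) (j := 3) (by norm_num) (by norm_num) s).deriv
  rwa [om_self, zero_add] at h

namespace IsAffineArcLength

theorem iteratedDeriv_two_tangentHeight_self (harc : IsAffineArcLength x) (hx : ContDiff ℝ 2 x)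
    (s₀ : ℝ) : iteratedDeriv 2 (tangentHeight x s₀) s₀ = 1 := by
  rw [iteratedDeriv_tangentHeight hx, harc]

theorem om_deriv_iteratedDeriv_three (harc : IsAffineArcLength x) (hx : ContDiff ℝ 3 x) (s : ℝ) :
    om (deriv x s) (iteratedDeriv 3 x s) = 0 := by
  have h := hasDerivAt_om_iteratedDeriv hx (i := 1) (j := 2) (by norm_num) (by norm_num) s
  simp only [iteratedDeriv_one, harc _, om_self, zero_add] at h
  exact h.unique (hasDerivAt_const s 1)

theorem om_deriv_iteratedDeriv_four (harc : IsAffineArcLength x) (hx : ContDiff ℝ 4 x) (s : ℝ) :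
    om (deriv x s) (iteratedDeriv 4 x s) = -affineCurvature x s := by
  have h := hasDerivAt_om_iteratedDeriv hx (i := 1) (j := 3) (by norm_num) (by norm_num) s
  simp only [iteratedDeriv_one,
    harc.om_deriv_iteratedDeriv_three (hx.of_le (by norm_num))] at h
  exact eq_neg_of_add_eq_zero_right (h.unique (hasDerivAt_const s 0))

theorem om_deriv_iteratedDeriv_five (harc : IsAffineArcLength x) (hx : ContDiff ℝ 5 x) (s : ℝ) :
    om (deriv x s) (iteratedDeriv 5 x s) = -2 * deriv (affineCurvature x) s := by
  have hx₄ : ContDiff ℝ 4 x := hx.of_le (by norm_num)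
  have h := (hasDerivAt_om_iteratedDeriv hx (i := 1) (j := 4) (by norm_num) (by norm_num) s).deriv
  simp only [iteratedDeriv_one, harc.om_deriv_iteratedDeriv_four hx₄, deriv.fun_neg,
    Nat.reduceAdd] at h
  rw [← deriv_affineCurvature hx₄] at h
  linarith

theorem exists_isReflectionAt_tangentHeight (harc : IsAffineArcLength x) {n : ℕ∞} (hn : n ≠ 0)
    (hx : ContDiff ℝ (n + 2) x) (s₀ : ℝ) :
    ∃ τ : ℝ → ℝ, (∀ᶠ s in 𝓝 s₀, ContDiffAt ℝ n τ s) ∧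
      IsReflectionAt (tangentHeight x s₀) τ s₀ := by
  have hx₂ : ContDiff ℝ 2 x := hx.of_le le_add_self
  refine exists_isReflectionAt hn (contDiff_tangentHeight hx s₀)
    (deriv_tangentHeight_self (hx₂.of_le one_le_two) s₀) ?_
  simp [harc.iteratedDeriv_two_tangentHeight_self hx₂]

theorem isLittleO_of_isReflectionAt_tangentHeight (harc : IsAffineArcLength x) (hx : ContDiff ℝ 6 x)
    {τ : ℝ → ℝ} {s₀ : ℝ} (hτ : IsReflectionAt (tangentHeight x s₀) τ s₀) :
    (fun s ↦ τ s - (2 * s₀ - s + (1 / 30) * deriv (affineCurvature x) s₀ * (s - s₀) ^ 4))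
      =o[𝓝 s₀] fun s ↦ (s - s₀) ^ 5 := by
  have h₁ := deriv_tangentHeight_self (hx.of_le (by norm_num)) s₀
  have h₂ := harc.iteratedDeriv_two_tangentHeight_self (hx.of_le (by norm_num)) s₀
  have h₃ : iteratedDeriv 3 (tangentHeight x s₀) s₀ = 0 := by
    rw [iteratedDeriv_tangentHeight (hx.of_le (by norm_num)),
      harc.om_deriv_iteratedDeriv_three (hx.of_le (by norm_num))]
  have h₅ : iteratedDeriv 5 (tangentHeight x s₀) s₀ = -2 * deriv (affineCurvature x) s₀ := by
    rw [iteratedDeriv_tangentHeight (hx.of_le (by norm_num)),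
      harc.om_deriv_iteratedDeriv_five (hx.of_le (by norm_num))]
  have hb : 60 * iteratedDeriv 2 (tangentHeight x s₀) s₀ * (-deriv (affineCurvature x) s₀ / 30) =
      iteratedDeriv 5 (tangentHeight x s₀) s₀ := by
    rw [h₂, h₅]
    ring
  refine (hτ.isLittleO_sub_quarticReflection (contDiff_tangentHeight hx s₀) h₁ (by simp [h₂]) h₃
    hb).congr_left fun s ↦ ?_
  rw [quarticReflection]
  ring

end IsAffineArcLength

end AffineGeometry

theorem stmt_4_general {n : ℕ∞} (hn : 4 ≤ n) (x : ℝ → ℝ × ℝ) (hx : ContDiff ℝ (n + 2) x)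
    (haff : ∀ s : ℝ, om (deriv x s) (iteratedDeriv 2 x s) = 1)
    (k : ℝ → ℝ) (hk : ∀ s : ℝ, k s = om (iteratedDeriv 2 x s) (iteratedDeriv 3 x s))
    (s₀ : ℝ) :
    ∃ δ > (0 : ℝ), ∃ τ : ℝ → ℝ,
      ContDiffOn ℝ n τ (Set.Ioo (s₀ - δ) (s₀ + δ)) ∧
      τ s₀ = s₀ ∧ deriv τ s₀ = -1 ∧
      (∀ s ∈ Set.Ioo (s₀ - δ) (s₀ + δ), om (x s - x (τ s)) (deriv x s₀) = 0) ∧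
      (fun s : ℝ => τ s - (2 * s₀ - s + (1 / 30) * deriv k s₀ * (s - s₀) ^ 4))
        =o[𝓝 s₀] fun s : ℝ => (s - s₀) ^ 5 := by
  obtain rfl : k = affineCurvature x := funext hk
  have harc : IsAffineArcLength x := haff
  have hx₆ : ContDiff ℝ 6 x := hx.of_le <| by
    calc (6 : WithTop ℕ∞) = 4 + 2 := by norm_num
      _ ≤ n + 2 := by gcongr; exact WithTop.coe_le_coe.2 hn
  obtain ⟨τ, hsmooth, hτ⟩ :=
    harc.exists_isReflectionAt_tangentHeight (zero_lt_four.trans_le hn).ne' hx s₀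
  obtain ⟨δ, hδ, hball⟩ :=
    Metric.eventually_nhds_iff_ball.1 (hsmooth.and hτ.comp_eventuallyEq)
  rw [Real.ball_eq_Ioo] at hball
  exact ⟨δ, hδ, τ, fun s hs ↦ (hball s hs).1.contDiffWithinAt, hτ.apply_self, hτ.hasDerivAt.deriv,
    fun s hs ↦ om_sub_deriv_eq_zero_iff.2 (hball s hs).2,
    harc.isLittleO_of_isReflectionAt_tangentHeight hx₆ hτ⟩

theorem stmt_4 (x : ℝ → ℝ × ℝ) (hx : ContDiff ℝ (⊤ : ℕ∞) x)
    (haff : ∀ s : ℝ, om (deriv x s) (iteratedDeriv 2 x s) = 1)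
    (k : ℝ → ℝ) (hk : ∀ s : ℝ, k s = om (iteratedDeriv 2 x s) (iteratedDeriv 3 x s))
    (s₀ : ℝ) :
    ∃ δ > (0 : ℝ), ∃ τ : ℝ → ℝ,
      ContDiffOn ℝ (⊤ : ℕ∞) τ (Set.Ioo (s₀ - δ) (s₀ + δ)) ∧
      τ s₀ = s₀ ∧ deriv τ s₀ = -1 ∧
      (∀ s ∈ Set.Ioo (s₀ - δ) (s₀ + δ), om (x s - x (τ s)) (deriv x s₀) = 0) ∧
      (fun s : ℝ => τ s - (2 * s₀ - s + (1 / 30) * deriv k s₀ * (s - s₀) ^ 4))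
        =o[𝓝 s₀] fun s : ℝ => (s - s₀) ^ 5 :=
  stmt_4_general le_top x hx haff k hk s₀
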